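/- arXiv:2510.25326 — 4 statements merged into one kernel-verified Lean document; each statement's English description precedes it below -/
import Mathlib

section
/- Let d ≥ 3 be an integer and T > 0. Define Φ(ρ) = (2/ρ)·arctan(ρ/√(d−2)) for ρ > 0, and u_T(t,r) = (1/(T−t))·Φ(r/(T−t)) for t < T and r > 0. Then for every t < T and every r > 0 the identity ∂²_t u_T(t,r) − ∂²_r u_T(t,r) − ((d+1)/r)·∂_r u_T(t,r) = ((d−1)/(2r³))·(2r·u_T(t,r) − sin(2r·u_T(t,r))) holds. In other words, u_T is an exact self-similar solution of the corotational wave maps equation that blows up at the spatial origin as t → T⁻. -/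
/-- the explicit Turok–Spergel / Bizoń–Biernat profile
`u_T(t,r) = (1/(T−t))·Φ(r/(T−t))`, `Φ(ρ) = (2/ρ)·arctan(ρ/√(d−2))`,
solves the corotational wave maps equation
`∂²_t u − ∂²_r u − ((d+1)/r)∂_r u = ((d−1)/(2r³))(2ru − sin(2ru))`
for all `t < T`, `r > 0`. -/
theorem stmt_0 (d : ℕ) (hd : 3 ≤ d) (T : ℝ) (hT : 0 < T)
    (Φ : ℝ → ℝ)
    (hΦ : ∀ ρ : ℝ, 0 < ρ → Φ ρ = 2 / ρ * Real.arctan (ρ / Real.sqrt ((d : ℝ) - 2)))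
    (u : ℝ → ℝ → ℝ)
    (hu : ∀ t r : ℝ, t < T → 0 < r → u t r = (1 / (T - t)) * Φ (r / (T - t)))
    (t r : ℝ) (ht : t < T) (hr : 0 < r) :
    deriv (fun s => deriv (fun s' => u s' r) s) t
      - deriv (fun ρ => deriv (fun ρ' => u t ρ') ρ) r
      - ((d : ℝ) + 1) / r * deriv (fun ρ => u t ρ) r
      = ((d : ℝ) - 1) / (2 * r ^ 3) * (2 * r * u t r - Real.sin (2 * r * u t r)) := by
  have hd2 : (0:ℝ) < (d:ℝ) - 2 := by
    have : (3:ℝ) ≤ d := by exact_mod_cast hd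
    linarith
  obtain ⟨c, hc⟩ : ∃ c, c = Real.sqrt ((d : ℝ) - 2) := ⟨_, rfl⟩
  have hc0 : 0 < c := by rw [hc]; exact Real.sqrt_pos.mpr hd2
  have hdc : (d:ℝ) = c ^ 2 + 2 := by rw [hc, Real.sq_sqrt hd2.le]; ring
  have hU : ∀ s ρ : ℝ, s < T → 0 < ρ →
      u s ρ = 2 / ρ * Real.arctan (ρ / (c * (T - s))) := by
    intro s ρ hs hρ
    have h1 : 0 < T - s := by linarith
    rw [hu s ρ hs hρ, hΦ _ (by positivity), ← hc, div_div, mul_comm (T - s) c]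
    field_simp
  have hDp : ∀ s ρ : ℝ, 0 < ρ → 0 < c ^ 2 * (T - s) ^ 2 + ρ ^ 2 := by
    intro s ρ hρ; positivity
  -- first time derivative
  have ht1 : ∀ s : ℝ, s < T →
      deriv (fun s' => u s' r) s = 2 * c / (c ^ 2 * (T - s) ^ 2 + r ^ 2) := by
    intro s hs
    have h1 : 0 < T - s := by linarith
    have he : (fun s' => u s' r) =ᶠ[nhds s]
        fun s' => 2 / r * Real.arctan (r / (c * (T - s'))) := by
      filter_upwards [Iio_mem_nhds hs] with x hx
      exact hU x r hx hr
    rw [he.deriv_eq]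
    have hq : HasDerivAt (fun s' : ℝ => c * (T - s')) (c * (-1)) s :=
      ((hasDerivAt_id s).const_sub T).const_mul c
    have hq2 := (((hasDerivAt_const s r).div hq (by positivity)).arctan).const_mul (2 / r)
    refine hq2.deriv.trans ?_
    have := hDp s r hr
    simp only [Pi.div_apply]
    field_simp
    ring
  have hr1 : ∀ ρ : ℝ, 0 < ρ →
      deriv (fun ρ' => u t ρ') ρ = -2 / ρ ^ 2 * Real.arctan (ρ / (c * (T - t)))
        + 2 / ρ * (c * (T - t) / (c ^ 2 * (T - t) ^ 2 + ρ ^ 2)) := by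
    intro ρ hρ
    have h1 : 0 < T - t := by linarith
    have he : (fun ρ' => u t ρ') =ᶠ[nhds ρ]
        fun ρ' => 2 / ρ' * Real.arctan (ρ' / (c * (T - t))) := by
      filter_upwards [Ioi_mem_nhds hρ] with x hx
      exact hU t x ht hx
    rw [he.deriv_eq]
    have hq := ((hasDerivAt_const ρ (2:ℝ)).div (hasDerivAt_id ρ) hρ.ne').mul
      (((hasDerivAt_id ρ).div_const (c * (T - t))).arctan)
    refine hq.deriv.trans ?_
    have := hDp t ρ hρ
    simp only [Pi.div_apply, id]
    field_simp
    ring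
  have h1 : 0 < T - t := by linarith
  have hD := hDp t r hr
  have ht2 : deriv (fun s => deriv (fun s' => u s' r) s) t
      = 4 * c ^ 3 * (T - t) / (c ^ 2 * (T - t) ^ 2 + r ^ 2) ^ 2 := by
    have he : (fun s => deriv (fun s' => u s' r) s) =ᶠ[nhds t]
        fun s => 2 * c / (c ^ 2 * (T - s) ^ 2 + r ^ 2) := by
      filter_upwards [Iio_mem_nhds ht] with x hx
      exact ht1 x hx
    rw [he.deriv_eq]
    have hq := (hasDerivAt_const t (2 * c)).div
      (((((hasDerivAt_id t).const_sub T).pow 2).const_mul (c ^ 2)).add_const (r ^ 2)) hD.ne'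
    refine hq.deriv.trans ?_
    simp
    field_simp
    ring
  have hr2 : deriv (fun ρ => deriv (fun ρ' => u t ρ') ρ) r
      = 4 / r ^ 3 * Real.arctan (r / (c * (T - t)))
        - 4 / r ^ 2 * (c * (T - t) / (c ^ 2 * (T - t) ^ 2 + r ^ 2))
        - 4 * (c * (T - t)) / (c ^ 2 * (T - t) ^ 2 + r ^ 2) ^ 2 := by
    have he : (fun ρ => deriv (fun ρ' => u t ρ') ρ) =ᶠ[nhds r]
        fun ρ => -2 / ρ ^ 2 * Real.arctan (ρ / (c * (T - t)))
        + 2 / ρ * (c * (T - t) / (c ^ 2 * (T - t) ^ 2 + ρ ^ 2)) := by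
      filter_upwards [Ioi_mem_nhds hr] with x hx
      exact hr1 x hx
    rw [he.deriv_eq]
    have hq := (((hasDerivAt_const r (-2:ℝ)).div ((hasDerivAt_id r).pow 2)
        (by simp; exact hr.ne')).mul
      (((hasDerivAt_id r).div_const (c * (T - t))).arctan)).add
      (((hasDerivAt_const r (2:ℝ)).div (hasDerivAt_id r) hr.ne').mul
       ((hasDerivAt_const r (c * (T - t))).div
         (((hasDerivAt_id r).pow 2).const_add (c ^ 2 * (T - t) ^ 2)) hD.ne'))
    refine hq.deriv.trans ?_
    simp
    field_simp
    ring
  rw [ht2, hr2, hr1 r hr, hU t r ht hr, hdc]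
  have hs : Real.sin (2 * r * (2 / r * Real.arctan (r / (c * (T - t)))))
      = 4 * r * (c * (T - t)) * (c ^ 2 * (T - t) ^ 2 - r ^ 2)
        / (c ^ 2 * (T - t) ^ 2 + r ^ 2) ^ 2 := by
    have e : 2 * r * (2 / r * Real.arctan (r / (c * (T - t))))
        = 2 * (2 * Real.arctan (r / (c * (T - t)))) := by field_simp
    rw [e, Real.sin_two_mul, Real.sin_two_mul, Real.cos_two_mul]
    have hcs := Real.cos_sq_arctan (r / (c * (T - t)))
    have hcp := Real.cos_arctan_pos (r / (c * (T - t)))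
    have hsn : Real.sin (Real.arctan (r / (c * (T - t))))
        = r / (c * (T - t)) * Real.cos (Real.arctan (r / (c * (T - t)))) := by
      have h := Real.tan_arctan (r / (c * (T - t)))
      rw [Real.tan_eq_sin_div_cos, div_eq_iff hcp.ne'] at h
      exact h
    rw [hsn]
    have e2 : ∀ a b : ℝ, 2 * (2 * (a * b) * b) * (2 * b ^ 2 - 1)
        = 4 * a * b ^ 2 * (2 * b ^ 2 - 1) := by intros; ring
    rw [e2, hcs]
    field_simp
    ring
  rw [hs]
  generalize Real.arctan (r / (c * (T - t))) = A
  field_simp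
  ring
end

section
/- Let n ≥ 5 be an integer and T ∈ ℝ. Define φ(t,x) = (2/|x|)·arctan(|x|/(√(n−4)·(T−t))) for t < T and x ∈ ℝⁿ with x ≠ 0. Then for every t < T and every x ∈ ℝⁿ \ {0}, φ satisfies ∂²_t φ(t,x) − Δφ(t,x) = ((n−3)/(2|x|³))·(2|x|·φ(t,x) − sin(2|x|·φ(t,x))), where Δ is the Laplacian on ℝⁿ. -/
/-- The Laplacian on `ℝⁿ`, as the sum of the second partial derivatives along
the standard coordinate directions. -/
noncomputable def lapl {n : ℕ} (f : EuclideanSpace ℝ (Fin n) → ℝ)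
    (x : EuclideanSpace ℝ (Fin n)) : ℝ :=
  ∑ i : Fin n,
    fderiv ℝ (fun y => fderiv ℝ f y (EuclideanSpace.single i 1)) x
      (EuclideanSpace.single i 1)

theorem hasFDerivAt_norm_aux {n : ℕ} (x : EuclideanSpace ℝ (Fin n)) (hx : x ≠ 0) :
    HasFDerivAt (fun y : EuclideanSpace ℝ (Fin n) => ‖y‖) (‖x‖⁻¹ • innerSL ℝ x) x := by
  have h1 := (hasStrictFDerivAt_norm_sq x).hasFDerivAt
  have hp : 0 < ‖x‖ := norm_pos_iff.mpr hx
  have h2 := h1.sqrt (by positivity)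
  have h3 : (fun y : EuclideanSpace ℝ (Fin n) => √(‖y‖ ^ 2)) = fun y => ‖y‖ := by
    funext y; exact Real.sqrt_sq (norm_nonneg y)
  rw [h3] at h2
  refine h2.congr_fderiv ?_
  rw [Real.sqrt_sq hp.le]
  ext v
  simp
  field_simp

theorem lapl_radial {n : ℕ} (f : EuclideanSpace ℝ (Fin n) → ℝ) (g h : ℝ → ℝ) (h' : ℝ)
    (x : EuclideanSpace ℝ (Fin n)) (hx : x ≠ 0)
    (hf : ∀ y, y ≠ 0 → f y = g ‖y‖)
    (hg : ∀ r, 0 < r → HasDerivAt g (r * h r) r)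
    (hh : HasDerivAt h h' ‖x‖) : lapl f x = ‖x‖ * h' + n * h ‖x‖ := by
  have hp : 0 < ‖x‖ := norm_pos_iff.mpr hx
  have key : ∀ y : EuclideanSpace ℝ (Fin n), y ≠ 0 → ∀ i,
      fderiv ℝ f y (EuclideanSpace.single i 1) = h ‖y‖ * y i := by
    intro y hy i
    have hq : 0 < ‖y‖ := norm_pos_iff.mpr hy
    have h1 := (hg ‖y‖ hq).comp_hasFDerivAt y (hasFDerivAt_norm_aux y hy)
    have h2 : f =ᶠ[nhds y] (g ∘ fun y => ‖y‖) := by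
      filter_upwards [isOpen_ne.mem_nhds hy] with z hz using hf z hz
    rw [(h1.congr_of_eventuallyEq h2).fderiv]
    simp [EuclideanSpace.inner_single_right]
    field_simp
  have key2 : ∀ i, fderiv ℝ (fun y => fderiv ℝ f y (EuclideanSpace.single i 1)) x
      (EuclideanSpace.single i 1) = h' * ‖x‖⁻¹ * (x i) ^ 2 + h ‖x‖ := by
    intro i
    have h1 := hh.comp_hasFDerivAt x (hasFDerivAt_norm_aux x hx)
    have h3 := h1.mul (EuclideanSpace.proj i : EuclideanSpace ℝ (Fin n) →L[ℝ] ℝ).hasFDerivAt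
    have h2 : (fun y => fderiv ℝ f y (EuclideanSpace.single i 1)) =ᶠ[nhds x]
        ((h ∘ fun y => ‖y‖) * fun y => (EuclideanSpace.proj i : EuclideanSpace ℝ (Fin n) →L[ℝ] ℝ) y) := by
      filter_upwards [isOpen_ne.mem_nhds hx] with z hz using key z hz i
    rw [(h3.congr_of_eventuallyEq h2).fderiv]
    simp [EuclideanSpace.inner_single_right]
    ring
  unfold lapl
  simp only [key2]
  rw [Finset.sum_add_distrib, ← Finset.mul_sum, ← EuclideanSpace.real_norm_sq_eq]
  simp
  field_simp

theorem sin_four_arctan (z : ℝ) :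
    Real.sin (4 * Real.arctan z) = 4 * z * (1 - z ^ 2) / (1 + z ^ 2) ^ 2 := by
  have e : 4 * Real.arctan z = 2 * (2 * Real.arctan z) := by ring
  have hs : √(1 + z ^ 2) ^ 2 = 1 + z ^ 2 := Real.sq_sqrt (by positivity)
  have hs0 : 0 < √(1 + z ^ 2) := Real.sqrt_pos.mpr (by positivity)
  have h0 : (0:ℝ) < 1 + z ^ 2 := by positivity
  have a : Real.sin (2 * Real.arctan z) = 2 * z / (1 + z ^ 2) := by
    rw [Real.sin_two_mul, Real.sin_arctan, Real.cos_arctan, ← hs]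
    simp only [Real.sqrt_sq hs0.le]
    field_simp
  have b : Real.cos (2 * Real.arctan z) = (1 - z ^ 2) / (1 + z ^ 2) := by
    rw [Real.cos_two_mul, Real.cos_sq_arctan]
    field_simp
    ring
  rw [e, Real.sin_two_mul, a, b]
  field_simp
  ring

theorem hasDerivAt_atan_r (c r : ℝ) (hc : 0 < c) :
    HasDerivAt (fun r => Real.arctan (r / c)) (c / (c ^ 2 + r ^ 2)) r := by
  refine (((hasDerivAt_id r).div_const c).arctan).congr_deriv ?_
  simp only [id]
  field_simp

/-- `φ(t,x) = (2/|x|)·arctan(|x|/(√(n−4)(T−t)))` satisfies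
`∂²_t φ − Δφ = ((n−3)/(2|x|³))(2|x|φ − sin(2|x|φ))` for all `t < T`, `x ≠ 0`. -/
theorem stmt_1 (n : ℕ) (hn : 5 ≤ n) (T : ℝ)
    (φ : ℝ → EuclideanSpace ℝ (Fin n) → ℝ)
    (hφ : ∀ (t : ℝ) (x : EuclideanSpace ℝ (Fin n)), t < T → x ≠ 0 →
      φ t x = 2 / ‖x‖ * Real.arctan (‖x‖ / (Real.sqrt ((n : ℝ) - 4) * (T - t))))
    (t : ℝ) (ht : t < T) (x : EuclideanSpace ℝ (Fin n)) (hx : x ≠ 0) :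
    deriv (fun s => deriv (fun s' => φ s' x) s) t - lapl (φ t) x
      = ((n : ℝ) - 3) / (2 * ‖x‖ ^ 3)
          * (2 * ‖x‖ * φ t x - Real.sin (2 * ‖x‖ * φ t x)) := by
  set k := Real.sqrt ((n : ℝ) - 4) with hk
  have hn' : (5 : ℝ) ≤ n := by exact_mod_cast hn
  have hk0 : 0 < k := Real.sqrt_pos.mpr (by linarith)
  have hk2 : (n : ℝ) = k ^ 2 + 4 := by
    rw [hk, Real.sq_sqrt (by linarith)]; ring
  have hp : 0 < ‖x‖ := norm_pos_iff.mpr hx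
  have hτ : 0 < T - t := sub_pos.mpr ht
  have hc : 0 < k * (T - t) := mul_pos hk0 hτ
  -- Laplacian
  have hL := lapl_radial (φ t) (fun r => 2 / r * Real.arctan (r / (k * (T - t))))
    (fun r => -2 / r ^ 3 * Real.arctan (r / (k * (T - t)))
      + 2 * (k * (T - t)) / (r ^ 2 * ((k * (T - t)) ^ 2 + r ^ 2)))
    (6 / ‖x‖ ^ 4 * Real.arctan (‖x‖ / (k * (T - t)))
      - 2 / ‖x‖ ^ 3 * ((k * (T - t)) / ((k * (T - t)) ^ 2 + ‖x‖ ^ 2))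
      - 2 * (k * (T - t)) * (2 * ‖x‖ * (k * (T - t)) ^ 2 + 4 * ‖x‖ ^ 3)
        / (‖x‖ ^ 2 * ((k * (T - t)) ^ 2 + ‖x‖ ^ 2)) ^ 2) x hx
    (fun y hy => hφ t y ht hy)
    (by
      intro r hr
      generalize k * (T - t) = c at hc
      have h1 := ((hasDerivAt_const r (2:ℝ)).div (hasDerivAt_id r) hr.ne').mul
        (hasDerivAt_atan_r c r hc)
      refine h1.congr_deriv ?_
      simp
      field_simp)
    (by
      generalize ‖x‖ = r at hp
      generalize k * (T - t) = c at hc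
      have h1 := ((hasDerivAt_const r (-2:ℝ)).div (hasDerivAt_pow 3 r) (by positivity)).mul
        (hasDerivAt_atan_r c r hc)
      have h2 := (hasDerivAt_const r (2 * c)).div ((hasDerivAt_pow 2 r).mul
        ((hasDerivAt_pow 2 r).const_add (c ^ 2))) (by simp only [Pi.mul_apply]; positivity)
      refine (h1.add h2).congr_deriv ?_
      simp
      field_simp
      ring)
  -- time derivatives
  have hT1 : ∀ s, s < T → deriv (fun s' => φ s' x) s
      = 2 * k / (k ^ 2 * (T - s) ^ 2 + ‖x‖ ^ 2) := by
    intro s hs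
    have hσ : 0 < T - s := sub_pos.mpr hs
    have e : (fun s' => φ s' x) =ᶠ[nhds s]
        fun s' => 2 / ‖x‖ * Real.arctan (‖x‖ / (k * (T - s'))) := by
      filter_upwards [isOpen_Iio.mem_nhds hs] with z hz using hφ z x hz hx
    rw [e.deriv_eq]
    have h1 := (((hasDerivAt_const s ‖x‖).div (((hasDerivAt_id s).const_sub T).const_mul k)
      (by simp only [id]; positivity)).arctan).const_mul (2 / ‖x‖)
    refine (h1.congr_deriv ?_).deriv
    simp
    field_simp
  have hT2 : deriv (fun s => deriv (fun s' => φ s' x) s) t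
      = 4 * k ^ 3 * (T - t) / (k ^ 2 * (T - t) ^ 2 + ‖x‖ ^ 2) ^ 2 := by
    have e : (fun s => deriv (fun s' => φ s' x) s) =ᶠ[nhds t]
        fun s => 2 * k / (k ^ 2 * (T - s) ^ 2 + ‖x‖ ^ 2) := by
      filter_upwards [isOpen_Iio.mem_nhds ht] with z hz using hT1 z hz
    rw [e.deriv_eq]
    have h1 := (hasDerivAt_const t (2 * k)).div
      (((((hasDerivAt_id t).const_sub T).pow 2).const_mul (k ^ 2)).add_const (‖x‖ ^ 2))
      (by simp only [Pi.pow_apply, id]; positivity)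
    refine (h1.congr_deriv ?_).deriv
    simp
    ring
  have e4 : 2 * ‖x‖ * φ t x = 4 * Real.arctan (‖x‖ / (k * (T - t))) := by
    rw [hφ t x ht hx]
    field_simp
    ring
  rw [hL, hT2, e4, sin_four_arctan, hk2]
  clear_value k
  generalize Real.arctan (‖x‖ / (k * (T - t))) = A
  generalize ‖x‖ = r at *
  generalize T - t = τ at *
  field_simp
  ring
end

section
/- Let n ≥ 5 be an integer. Define Φ(ρ) = (2/ρ)·arctan(ρ/√(n−4)) and Φ̂(ρ) = Φ(ρ) + ρ·Φ′(ρ) for ρ > 0. Then for every ρ > 0 the static self-similar system holds: Φ″(ρ) + ((n−1)/ρ)·Φ′(ρ) − 2·Φ̂(ρ) − ρ·Φ̂′(ρ) + ((n−3)/(2ρ³))·(2ρ·Φ(ρ) − sin(2ρ·Φ(ρ))) = 0. That is, the pair (Φ, Φ̂) is a static (τ-independent) solution of the corotational wave maps system in similarity variables. -/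
theorem aux_sin (s r : ℝ) (hs : 0 < s) :
    Real.sin (2 * (2 * Real.arctan (r / s))) = 4 * r * s * (s ^ 2 - r ^ 2) / (s ^ 2 + r ^ 2) ^ 2 := by
  have hD : s ^ 2 + r ^ 2 ≠ 0 := by positivity
  have h1 : (0 : ℝ) < 1 + (r / s) ^ 2 := by positivity
  have hc : Real.cos (Real.arctan (r / s)) ^ 2 = s ^ 2 / (s ^ 2 + r ^ 2) := by
    rw [Real.cos_sq_arctan]; field_simp
  have ht : Real.sin (Real.arctan (r / s)) = r / s * Real.cos (Real.arctan (r / s)) := by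
    have := Real.tan_mul_cos (Real.cos_arctan_pos (r / s)).ne'
    rw [Real.tan_arctan] at this
    exact this.symm
  rw [Real.sin_two_mul, Real.sin_two_mul, Real.cos_two_mul, ht]
  have e : ∀ c : ℝ, 2 * (2 * (r / s * c) * c) * (2 * c ^ 2 - 1) = 4 * (r / s) * c ^ 2 * (2 * c ^ 2 - 1) := by
    intro c; ring
  rw [e, hc]
  field_simp
  ring


/-- the pair `(Φ, Φ̂)`, with `Φ(ρ) = (2/ρ)·arctan(ρ/√(n−4))` and
`Φ̂ = Φ + ρΦ′`, is a static solution of the corotational wave maps system in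
similarity variables:
`Φ″ + ((n−1)/ρ)Φ′ − 2Φ̂ − ρΦ̂′ + ((n−3)/(2ρ³))(2ρΦ − sin(2ρΦ)) = 0`. -/
theorem stmt_4 (n : ℕ) (hn : 5 ≤ n)
    (Φ Φhat : ℝ → ℝ)
    (hΦ : ∀ ρ : ℝ, 0 < ρ → Φ ρ = 2 / ρ * Real.arctan (ρ / Real.sqrt ((n : ℝ) - 4)))
    (hΦhat : ∀ ρ : ℝ, 0 < ρ → Φhat ρ = Φ ρ + ρ * deriv Φ ρ)
    (ρ : ℝ) (hρ : 0 < ρ) :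
    deriv (deriv Φ) ρ + ((n : ℝ) - 1) / ρ * deriv Φ ρ
      - 2 * Φhat ρ - ρ * deriv Φhat ρ
      + ((n : ℝ) - 3) / (2 * ρ ^ 3) * (2 * ρ * Φ ρ - Real.sin (2 * ρ * Φ ρ)) = 0 := by
  have hn' : (5 : ℝ) ≤ n := by exact_mod_cast hn
  obtain ⟨s, hs_def⟩ : ∃ s, s = Real.sqrt ((n : ℝ) - 4) := ⟨_, rfl⟩
  have hs : 0 < s := by rw [hs_def]; apply Real.sqrt_pos.mpr; linarith
  have hs2 : s ^ 2 = (n : ℝ) - 4 := by rw [hs_def]; apply Real.sq_sqrt; linarith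
  rw [← hs_def] at hΦ
  have hA : ∀ r : ℝ, HasDerivAt (fun x => 2 * Real.arctan (x / s)) (2 * s / (s ^ 2 + r ^ 2)) r := by
    intro r
    have h := (((hasDerivAt_id r).div_const s).arctan).const_mul 2
    refine HasDerivAt.congr_deriv (f := _) h ?_
    have hD : s ^ 2 + r ^ 2 ≠ 0 := by positivity
    simp only [id]
    field_simp
  have hG : ∀ r : ℝ, HasDerivAt (fun x => 2 * s / (s ^ 2 + x ^ 2)) (-(4 * s * r) / (s ^ 2 + r ^ 2) ^ 2) r := by
    intro r
    have hD : s ^ 2 + r ^ 2 ≠ 0 := by positivity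
    have h := (hasDerivAt_const r (2 * s)).div (((hasDerivAt_id r).pow 2).const_add (s ^ 2)) hD
    refine HasDerivAt.congr_deriv (f := _) h ?_
    congr 1
    simp
    ring
  have hd : ∀ r : ℝ, 0 < r → deriv Φ r = 2 * s / (s ^ 2 + r ^ 2) / r - 2 * Real.arctan (r / s) / r ^ 2 := by
    intro r hr
    have h := (hA r).div (hasDerivAt_id r) hr.ne'
    have he : Φ =ᶠ[nhds r] ((fun x => 2 * Real.arctan (x / s)) / id) := by
      filter_upwards [lt_mem_nhds hr] with x hx
      rw [hΦ x hx]
      simp only [Pi.div_apply, id]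
      ring
    rw [he.deriv_eq, h.deriv]
    simp only [id]
    field_simp
  have hdd : deriv (deriv Φ) ρ = -(4 * s * ρ) / (s ^ 2 + ρ ^ 2) ^ 2 / ρ
      - 2 * (2 * s / (s ^ 2 + ρ ^ 2)) / ρ ^ 2 + 2 * (2 * Real.arctan (ρ / s)) / ρ ^ 3 := by
    have h := ((hG ρ).div (hasDerivAt_id ρ) hρ.ne').sub
      ((hA ρ).div ((hasDerivAt_id ρ).pow 2) (pow_ne_zero 2 hρ.ne'))
    have he : deriv Φ =ᶠ[nhds ρ] ((fun x => 2 * s / (s ^ 2 + x ^ 2)) / id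
        - (fun x => 2 * Real.arctan (x / s)) / id ^ 2) := by
      filter_upwards [lt_mem_nhds hρ] with x hx
      rw [hd x hx]
      rfl
    rw [he.deriv_eq, h.deriv]
    have hD : s ^ 2 + ρ ^ 2 ≠ 0 := by positivity
    simp
    field_simp
    ring
  have hh : ∀ r : ℝ, 0 < r → Φhat r = 2 * s / (s ^ 2 + r ^ 2) := by
    intro r hr
    have hD : s ^ 2 + r ^ 2 ≠ 0 := by positivity
    rw [hΦhat r hr, hd r hr, hΦ r hr]
    field_simp
    ring
  have hhd : deriv Φhat ρ = -(4 * s * ρ) / (s ^ 2 + ρ ^ 2) ^ 2 := by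
    have he : Φhat =ᶠ[nhds ρ] (fun x => 2 * s / (s ^ 2 + x ^ 2)) := by
      filter_upwards [lt_mem_nhds hρ] with x hx
      exact hh x hx
    rw [he.deriv_eq, (hG ρ).deriv]
  have hP : 2 * ρ * Φ ρ = 2 * (2 * Real.arctan (ρ / s)) := by
    rw [hΦ ρ hρ]; field_simp
  have hD : s ^ 2 + ρ ^ 2 ≠ 0 := by positivity
  have hN : (n : ℝ) = s ^ 2 + 4 := by linarith
  rw [hP, aux_sin s ρ hs, hdd, hd ρ hρ, hhd, hh ρ hρ, hN]
  generalize Real.arctan (ρ / s) = θ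
  field_simp
  ring
end

section
/- Let n ≥ 5 be an integer. Define g: ℝⁿ → ℝ by g(ξ) = 1/(|ξ|² + n − 4), and ĝ(ξ) = ξ·∇g(ξ) + 2g(ξ). Then for every ξ ∈ ℝⁿ both of the following hold: (i) −g(ξ) − ξ·∇g(ξ) + ĝ(ξ) = g(ξ); (ii) Δg(ξ) − 2ĝ(ξ) − ξ·∇ĝ(ξ) + (8(n−4)(n−3)/(|ξ|² + n − 4)²)·g(ξ) = ĝ(ξ). That is, the pair (g, ĝ) is an eigenfunction with eigenvalue 1 of the linearized operator in similarity variables. -/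
theorem stmt6_aux_D (n : ℕ) (hn : 5 ≤ n) (x : EuclideanSpace ℝ (Fin n)) :
    0 < ‖x‖ ^ 2 + (n : ℝ) - 4 := by
  have : (5 : ℝ) ≤ n := by exact_mod_cast hn
  nlinarith [sq_nonneg ‖x‖]

theorem stmt6_aux_fd (n : ℕ) (x v : EuclideanSpace ℝ (Fin n)) (φ : ℝ → ℝ) (c : ℝ)
    (h : HasDerivAt φ c (‖x‖ ^ 2 + (n : ℝ) - 4)) :
    HasFDerivAt (fun y : EuclideanSpace ℝ (Fin n) => φ (‖y‖ ^ 2 + (n : ℝ) - 4))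
      (c • ((2 : ℝ) • innerSL ℝ x)) x := by
  have h1 : HasFDerivAt (fun y : EuclideanSpace ℝ (Fin n) => ‖y‖ ^ 2 + (n : ℝ) - 4)
      ((2 : ℝ) • innerSL ℝ x) x := by
    have h2 := (hasStrictFDerivAt_norm_sq x).hasFDerivAt
    have h3 := (h2.add_const (n : ℝ)).sub_const 4
    refine h3.congr_fderiv ?_
    ext v
    simp [two_smul, two_mul]
  exact h.comp_hasFDerivAt x h1

/-- the pair `(g, ĝ)` with `g(ξ) = 1/(|ξ|² + n − 4)` and
`ĝ = ξ·∇g + 2g` is an eigenfunction with eigenvalue `1` of the linearized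
operator in similarity variables:
(i) `−g − ξ·∇g + ĝ = g`;
(ii) `Δg − 2ĝ − ξ·∇ĝ + V·g = ĝ` with `V(ξ) = 8(n−4)(n−3)/(|ξ|² + n − 4)²`. -/
theorem stmt_6 (n : ℕ) (hn : 5 ≤ n)
    (g ghat : EuclideanSpace ℝ (Fin n) → ℝ)
    (hg : ∀ ξ : EuclideanSpace ℝ (Fin n), g ξ = 1 / (‖ξ‖ ^ 2 + (n : ℝ) - 4))
    (hghat : ∀ ξ : EuclideanSpace ℝ (Fin n), ghat ξ = fderiv ℝ g ξ ξ + 2 * g ξ) :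
    ∀ ξ : EuclideanSpace ℝ (Fin n),
      (-g ξ - fderiv ℝ g ξ ξ + ghat ξ = g ξ) ∧
      (lapl g ξ - 2 * ghat ξ - fderiv ℝ ghat ξ ξ
          + (8 * ((n : ℝ) - 4) * ((n : ℝ) - 3) / (‖ξ‖ ^ 2 + (n : ℝ) - 4) ^ 2) * g ξ
        = ghat ξ) := by
  have hgf : g = fun ξ => (‖ξ‖ ^ 2 + (n : ℝ) - 4)⁻¹ := by
    funext ξ; rw [hg, one_div]
  have hfg : ∀ x v : EuclideanSpace ℝ (Fin n), fderiv ℝ g x v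
      = -2 * inner ℝ x v / (‖x‖ ^ 2 + (n : ℝ) - 4) ^ 2 := by
    intro x v
    have h := stmt6_aux_fd n x v _ _ (hasDerivAt_inv (stmt6_aux_D n hn x).ne')
    rw [hgf, h.fderiv]
    simp
    ring
  have hgh : ghat = fun ξ => 2 * ((n : ℝ) - 4) * ((‖ξ‖ ^ 2 + (n : ℝ) - 4) ^ 2)⁻¹ := by
    funext x
    have hD := (stmt6_aux_D n hn x).ne'
    rw [hghat, hfg, hg, real_inner_self_eq_norm_sq]
    field_simp
    ring
  have hd2 : ∀ t : ℝ, t ≠ 0 → HasDerivAt (fun s : ℝ => (s ^ 2)⁻¹) (-2 / t ^ 3) t := by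
    intro t ht
    have h := (hasDerivAt_pow 2 t).inv (pow_ne_zero 2 ht)
    refine HasDerivAt.congr_deriv h ?_
    field_simp
    norm_num
    ring
  intro ξ
  have hD := (stmt6_aux_D n hn ξ).ne'
  have hD2 := stmt6_aux_fd n ξ ξ _ _ (hd2 _ hD)
  have hfgh : fderiv ℝ ghat ξ ξ
      = -8 * ((n : ℝ) - 4) * ‖ξ‖ ^ 2 / (‖ξ‖ ^ 2 + (n : ℝ) - 4) ^ 3 := by
    rw [hgh, (hD2.const_mul (2 * ((n : ℝ) - 4))).fderiv]
    simp
    ring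
  have hl : lapl g ξ = -2 * n / (‖ξ‖ ^ 2 + (n : ℝ) - 4) ^ 2
      + 8 * ‖ξ‖ ^ 2 / (‖ξ‖ ^ 2 + (n : ℝ) - 4) ^ 3 := by
    have hi : ∀ i : Fin n,
        fderiv ℝ (fun y => fderiv ℝ g y (EuclideanSpace.single i 1)) ξ
          (EuclideanSpace.single i 1) = -2 / (‖ξ‖ ^ 2 + (n : ℝ) - 4) ^ 2
          + 8 / (‖ξ‖ ^ 2 + (n : ℝ) - 4) ^ 3 * ξ i ^ 2 := by
      intro i
      have e : (fun y => fderiv ℝ g y (EuclideanSpace.single i 1))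
          = fun y : EuclideanSpace ℝ (Fin n) =>
            (-2 * (EuclideanSpace.proj i : EuclideanSpace ℝ (Fin n) →L[ℝ] ℝ) y)
              * ((‖y‖ ^ 2 + (n : ℝ) - 4) ^ 2)⁻¹ := by
        funext y
        rw [hfg]
        simp [EuclideanSpace.inner_single_right, div_eq_mul_inv]
      have hp := ((EuclideanSpace.proj i : EuclideanSpace ℝ (Fin n) →L[ℝ] ℝ).hasFDerivAt
        (x := ξ)).const_mul (-2 : ℝ)
      have hm : HasFDerivAt (fun y : EuclideanSpace ℝ (Fin n) =>
            (-2 * (EuclideanSpace.proj i : EuclideanSpace ℝ (Fin n) →L[ℝ] ℝ) y)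
              * ((‖y‖ ^ 2 + (n : ℝ) - 4) ^ 2)⁻¹) _ ξ := hp.mul hD2
      rw [e, hm.fderiv]
      simp [EuclideanSpace.inner_single_right]
      ring
    unfold lapl
    simp only [hi, Finset.sum_add_distrib, ← Finset.mul_sum]
    rw [EuclideanSpace.real_norm_sq_eq ξ]
    simp
    ring
  constructor
  · rw [hghat]; ring
  · rw [hl, hfgh, hgh, hg]
    field_simp
    ring
end
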